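/- arXiv:2306.02079 — 3 statements merged into one kernel-verified Lean document; each statement's English description precedes it below -/
import Mathlib

section
/- Let G be a connected graph with maximum degree Δ(G), let π be an ic-partition of G, and let X be a class of π. Then X forms an independent coalition with at most Δ(G) other classes of π. -/
namespace ICNL

variable {V : Type*}

/-- `S` is a dominating set of `G`. -/
def Dominating (G : SimpleGraph V) (S : Set V) : Prop :=
  ∀ v : V, v ∈ S ∨ ∃ u ∈ S, G.Adj u v

/-- `S` is an independent set of `G`. -/
def IndepSet (G : SimpleGraph V) (S : Set V) : Prop :=
  ∀ ⦃u : V⦄, u ∈ S → ∀ ⦃v : V⦄, v ∈ S → ¬ G.Adj u v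

/-- `S` is an independent dominating set of `G`. -/
def IndepDom (G : SimpleGraph V) (S : Set V) : Prop :=
  IndepSet G S ∧ Dominating G S

/-- `A` and `B` form an independent coalition in `G`. -/
def ICCoalition (G : SimpleGraph V) (A B : Set V) : Prop :=
  Disjoint A B ∧ IndepSet G A ∧ IndepSet G B ∧
    ¬ IndepDom G A ∧ ¬ IndepDom G B ∧ IndepDom G (A ∪ B)

/-- `π` is a partition of the vertex set into nonempty classes. -/
def IsPartition (π : Finset (Finset V)) : Prop :=
  (∀ A ∈ π, A.Nonempty) ∧ ∀ v : V, ∃! A : Finset V, A ∈ π ∧ v ∈ A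

/-- `π` is an independent coalition partition of `G`. -/
def IsICPartition (G : SimpleGraph V) (π : Finset (Finset V)) : Prop :=
  IsPartition π ∧
    ∀ A ∈ π, (∃ v : V, (A : Set V) = {v} ∧ Dominating G (A : Set V)) ∨
      (¬ IndepDom G (A : Set V) ∧
        ∃ B ∈ π, B ≠ A ∧ ICCoalition G (A : Set V) (B : Set V))

/-- The independent coalition number: the maximum number of classes of an
ic-partition of `G`. -/
noncomputable def IC (G : SimpleGraph V) : ℕ :=
  sSup {k | ∃ π : Finset (Finset V), IsICPartition G π ∧ π.card = k}


theorem stmt_3 {V : Type*} [Fintype V] (G : SimpleGraph V) [DecidableRel G.Adj]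
    (hconn : G.Connected) (π : Finset (Finset V)) (hπ : IsICPartition G π)
    (X : Finset V) (hX : X ∈ π) :
    {B : Finset V | B ∈ π ∧ B ≠ X ∧ ICCoalition G (X : Set V) (B : Set V)}.ncard
      ≤ G.maxDegree := by
  classical
  set S := {B : Finset V | B ∈ π ∧ B ≠ X ∧ ICCoalition G (X : Set V) (B : Set V)} with hS
  rcases S.eq_empty_or_nonempty with hE | ⟨B0, hB0⟩
  · rw [hE]; simp
  obtain ⟨x, hx⟩ := hπ.1.1 X hX
  have hnd : ¬ Dominating G (X : Set V) := fun h => hB0.2.2.2.2.2.1 ⟨hB0.2.2.2.1, h⟩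
  let U : Set V := {v | v ∉ X ∧ ∀ u ∈ X, ¬ G.Adj u v}
  have hU : ∃ v, v ∈ U := by
    unfold Dominating at hnd
    push Not at hnd
    obtain ⟨v, h1, h2⟩ := hnd
    exact ⟨v, by simpa using h1, by simpa using h2⟩
  obtain ⟨v0, hv0⟩ := hU
  have hxU : x ∉ U := fun h => h.1 hx
  obtain ⟨p⟩ := hconn.preconnected v0 x
  obtain ⟨d, -, hd1, hd2⟩ := p.exists_boundary_dart U hv0 hxU
  obtain ⟨⟨v, w⟩, hvw⟩ := d
  simp only at hd1 hd2 hvw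
  have hBU : ∀ B ∈ S, ∀ b ∈ B, b ∈ U := by
    rintro B ⟨-, -, hdis, -, -, -, -, hind, -⟩ b hb
    refine ⟨fun h => Set.disjoint_left.mp hdis (by simpa using h) (by simpa using hb), ?_⟩
    intro u hu
    exact hind (Or.inl (by simpa using hu)) (Or.inr (by simpa using hb))
  have hf : ∀ B : Finset V, ∃ f : V, B ∈ S → f ∈ B ∧ f ∈ insert v ((G.neighborFinset v).erase w) := by
    intro B
    by_cases hB : B ∈ S
    · have hdom := hB.2.2.2.2.2.2.2.2 v
      rcases hdom with h | ⟨u, hu, huv⟩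
      · rcases h with h | h
        · exact absurd (by simpa using h) hd1.1
        · exact ⟨v, fun _ => ⟨by simpa using h, by simp⟩⟩
      · rcases hu with h | h
        · exact absurd huv (hd1.2 u (by simpa using h))
        · have huB : u ∈ B := by simpa using h
          refine ⟨u, fun _ => ⟨huB, ?_⟩⟩
          have : u ≠ w := by
            rintro rfl
            exact hd2 (hBU B hB u huB)
          simp [this, huv.symm]
    · exact ⟨v, fun h => absurd h hB⟩
  choose f hf using hf
  have hcard : S.ncard ≤ (↑(insert v ((G.neighborFinset v).erase w)) : Set V).ncard := by
    refine Set.ncard_le_ncard_of_injOn f (fun B hB => by exact_mod_cast (hf B hB).2) ?_ (Finset.finite_toSet _)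
    intro A hA B hB hAB
    refine (hπ.1.2 (f A)).unique ⟨hA.1, (hf A hA).1⟩ ⟨hB.1, ?_⟩
    rw [hAB]; exact (hf B hB).1
  rw [Set.ncard_coe_finset] at hcard
  have hw : w ∈ G.neighborFinset v := by simpa using hvw
  have h1 := Finset.card_insert_le v ((G.neighborFinset v).erase w)
  have h2 := Finset.card_erase_add_one hw
  have h3 := G.degree_le_maxDegree v
  rw [← G.card_neighborFinset_eq_degree] at h3
  omega

end ICNL
end

section
/- For the path P_n on n vertices: IC(P_n) = n if n ≤ 4; IC(P_n) = 4 if n = 5; IC(P_n) = 5 if 6 ≤ n ≤ 9; and IC(P_n) = 6 if n ≥ 10. -/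
namespace ICNL

variable {V : Type*}

def nr (j k : ℕ) : Prop := j = k ∨ j + 1 = k ∨ j = k + 1

instance (j k : ℕ) : Decidable (nr j k) := by unfold nr; infer_instance

/-- coalition relation in terms of a colouring -/
def R {α : Type*} (n : ℕ) (c : ℕ → α) (A B : α) : Prop :=
  A ≠ B ∧ (∀ k, k + 1 < n → (c k = A ∨ c k = B) → (c (k+1) = A ∨ c (k+1) = B) → False) ∧
  (∀ k, k < n → ∃ j, j < n ∧ nr j k ∧ (c j = A ∨ c j = B)) ∧
  (∃ k, k < n ∧ ∀ j, j < n → nr j k → c j ≠ A) ∧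
  (∃ k, k < n ∧ ∀ j, j < n → nr j k → c j ≠ B)

theorem R.symm {α : Type*} {n : ℕ} {c : ℕ → α} {A B : α} (h : R n c A B) : R n c B A := by
  obtain ⟨h1, h2, h3, h4, h5⟩ := h
  refine ⟨h1.symm, fun k hk a b => h2 k hk a.symm b.symm, fun k hk => ?_, h5, h4⟩
  obtain ⟨j, hj, hn, h⟩ := h3 k hk
  exact ⟨j, hj, hn, h.symm⟩

theorem part_card {n : ℕ} {π : Finset (Finset (Fin n))} (h : IsPartition π) :
    ∃ cl : Fin n → Finset (Fin n), π = Finset.univ.image cl ∧ ∀ A ∈ π, ∀ v, v ∈ A ↔ cl v = A := by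
  choose cl hcl hu using h.2
  have key : ∀ A ∈ π, ∀ v, v ∈ A ↔ cl v = A := by
    intro A hA v
    constructor
    · intro hv; exact (hu v A ⟨hA, hv⟩).symm
    · rintro rfl; exact (hcl v).2
  refine ⟨cl, ?_, key⟩
  ext A
  simp only [Finset.mem_image, Finset.mem_univ, true_and]
  constructor
  · intro hA
    obtain ⟨v, hv⟩ := h.1 A hA
    exact ⟨v, (key A hA v).1 hv⟩
  · rintro ⟨v, rfl⟩; exact (hcl v).1

theorem card_le {n : ℕ} {π : Finset (Finset (Fin n))} (h : IsPartition π) : π.card ≤ n := by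
  obtain ⟨cl, rfl, -⟩ := part_card h
  simpa using Finset.card_image_le (s := (Finset.univ : Finset (Fin n))) (f := cl)

theorem extract {n : ℕ} (hn : 4 ≤ n) {π : Finset (Finset (Fin n))}
    (h : IsICPartition (SimpleGraph.pathGraph n) π) :
    ∃ c : ℕ → Finset (Fin n), (∀ A ∈ π, ∃ k, k < n ∧ c k = A) ∧ (∀ k, k < n → c k ∈ π) ∧
      ∀ A ∈ π, ∃ B ∈ π, R n c A B := by
  obtain ⟨cl, hπ, key⟩ := part_card h.1
  have hc : ∀ v : Fin n, (fun k => if h : k < n then cl ⟨k, h⟩ else ∅) v.1 = cl v := by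
    intro v; simp
  revert hc
  generalize (fun k => if h : k < n then cl ⟨k, h⟩ else ∅) = c
  intro hc
  have hc' : ∀ k (hk : k < n), c k = cl ⟨k, hk⟩ := fun k hk => hc ⟨k, hk⟩
  have nd : ∀ A ∈ π, IndepSet (SimpleGraph.pathGraph n) (A : Set (Fin n)) →
      ¬ IndepDom (SimpleGraph.pathGraph n) (A : Set (Fin n)) →
      ∃ k, k < n ∧ ∀ j, j < n → nr j k → c j ≠ A := by
    intro A hA hi hnd
    by_contra! hcon
    refine hnd ⟨hi, fun v => ?_⟩
    obtain ⟨j, hj, hnr, hcj⟩ := hcon v.1 v.2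
    rw [hc' j hj] at hcj
    have hm := (key A hA ⟨j, hj⟩).2 hcj
    rcases hnr with e | e
    · left; subst e; exact hm
    · right; refine ⟨_, hm, ?_⟩
      rw [SimpleGraph.pathGraph_adj]; simp; omega
  refine ⟨c, ?_, ?_, ?_⟩
  · intro A hA
    have hA' := hA
    rw [hπ] at hA'
    simp only [Finset.mem_image, Finset.mem_univ, true_and] at hA'
    obtain ⟨v, hv⟩ := hA'
    exact ⟨v.1, v.2, by rw [hc]; exact hv⟩
  · intro k hk
    rw [hc' k hk, hπ]
    exact Finset.mem_image_of_mem _ (Finset.mem_univ _)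
  · intro A hA
    rcases h.2 A hA with ⟨v, hv, hd⟩ | ⟨-, B, hB, hBA, hdis, hiA, hiB, hnA, hnB, hi, hd⟩
    · exfalso
      rw [hv] at hd
      have aux : ∀ w : Fin n, nr v.1 w.1 := by
        intro w
        rcases hd w with e | ⟨u, hu, ha⟩
        · left; rw [Set.mem_singleton_iff] at e; rw [e]
        · rw [Set.mem_singleton_iff] at hu
          rw [hu, SimpleGraph.pathGraph_adj] at ha
          unfold nr; omega
      have a0 := aux ⟨0, by omega⟩
      have a1 := aux ⟨3, by omega⟩
      unfold nr at a0 a1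
      simp only at a0 a1
      omega
    · refine ⟨B, hB, hBA.symm, ?_, ?_, nd A hA hiA hnA, nd B hB hiB hnB⟩
      · intro k hk h1 h2
        rw [hc' k (by omega), ← key A hA, ← key B hB] at h1
        rw [hc' (k+1) hk, ← key A hA, ← key B hB] at h2
        refine hi (u := ⟨k, by omega⟩) (by simpa using h1) (v := ⟨k+1, hk⟩) (by simpa using h2) ?_
        rw [SimpleGraph.pathGraph_adj]; simp
      · intro k hk
        rcases hd ⟨k, hk⟩ with hm | ⟨u, hm, ha⟩
        · refine ⟨k, hk, Or.inl rfl, ?_⟩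
          rw [hc' k hk, ← key A hA, ← key B hB]; simpa using hm
        · refine ⟨u.1, u.2, ?_, ?_⟩
          · rw [SimpleGraph.pathGraph_adj] at ha; simp only at ha; unfold nr; omega
          · rw [hc, ← key A hA, ← key B hB]; simpa using hm

theorem three {α : Type*} {n : ℕ} {c : ℕ → α} {X : α} :
    ∀ m k, n ≤ k + 2 + m → k + 2 < n → R n c X (c k) → R n c X (c (k+1)) → R n c X (c (k+2)) →
     c k ≠ c (k+1) → c k ≠ c (k+2) → c (k+1) ≠ c (k+2) → False := by
  intro m
  induction m with
  | zero => intro k h1 h2; omega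
  | succ m ih =>
    intro k hm hk r0 r1 r2 d1 d2 d3
    obtain ⟨j, hj, hnr, hcj⟩ := r0.2.2.1 (k+2) hk
    have : j = k + 3 := by
      rcases hnr with e | e | e
      · subst e; rcases hcj with e | e
        · exact absurd e.symm r2.1
        · exact absurd e.symm d2
      · obtain rfl : j = k + 1 := by omega
        rcases hcj with e | e
        · exact absurd e.symm r1.1
        · exact absurd e.symm d1
      · omega
    subst this
    have e : c (k+3) = c k := by
      rcases hcj with e | e
      · exact (r2.2.1 (k+2) hj (Or.inr rfl) (Or.inl e)).elim
      · exact e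
    exact ih (k+1) (by omega) hj r1 r2 (e ▸ r0) d3 (by rw [show k+1+2 = k+3 from rfl, e]; exact d1.symm)
      (by rw [show k+1+2 = k+3 from rfl, e]; exact d2.symm)

theorem no_three {α : Type*} {n : ℕ} {c : ℕ → α} {X B1 B2 B3 : α}
    (r1 : R n c X B1) (r2 : R n c X B2) (r3 : R n c X B3)
    (d1 : B1 ≠ B2) (d2 : B1 ≠ B3) (d3 : B2 ≠ B3) : False := by
  obtain ⟨v, hv, hX⟩ := r1.2.2.2.1
  have f : ∀ B, R n c X B → ∃ j, j < n ∧ nr j v ∧ c j = B := by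
    intro B r
    obtain ⟨j, hj, hn, h⟩ := r.2.2.1 v hv
    exact ⟨j, hj, hn, h.resolve_left (hX j hj hn)⟩
  obtain ⟨j1, l1, n1, e1⟩ := f B1 r1
  obtain ⟨j2, l2, n2, e2⟩ := f B2 r2
  obtain ⟨j3, l3, n3, e3⟩ := f B3 r3
  subst e1 e2 e3
  have q1 : j1 ≠ j2 := fun e => d1 (by rw [e])
  have q2 : j1 ≠ j3 := fun e => d2 (by rw [e])
  have q3 : j2 ≠ j3 := fun e => d3 (by rw [e])
  have hR : ∀ j, j = j1 ∨ j = j2 ∨ j = j3 → R n c X (c j) := by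
    rintro j (rfl | rfl | rfl) <;> assumption
  have hD : ∀ i j, (i = j1 ∨ i = j2 ∨ i = j3) → (j = j1 ∨ j = j2 ∨ j = j3) → i ≠ j → c i ≠ c j := by
    rintro i j (rfl | rfl | rfl) (rfl | rfl | rfl) h <;> first | exact absurd rfl h | assumption | (apply Ne.symm; assumption)
  unfold nr at n1 n2 n3
  obtain ⟨k, rfl⟩ : ∃ k, v = k + 1 := ⟨v - 1, by omega⟩
  exact three n k (by omega) (by omega) (hR _ (by omega)) (hR _ (by omega)) (hR _ (by omega))
    (hD _ _ (by omega) (by omega) (by omega)) (hD _ _ (by omega) (by omega) (by omega))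
    (hD _ _ (by omega) (by omega) (by omega))

open Classical in
theorem partners_le {α : Type*} {n : ℕ} {c : ℕ → α} (π : Finset α) (X : α) :
    (π.filter (R n c X)).card ≤ 2 := by
  by_contra! h
  obtain ⟨a, b, d, ha, hb, hd, h1, h2, h3⟩ := Finset.two_lt_card_iff.1 h
  simp only [Finset.mem_filter] at ha hb hd
  exact no_three ha.2 hb.2 hd.2 h1 h2 h3

open Classical in
theorem cover {α : Type*} {n : ℕ} (hn : 4 ≤ n) {c : ℕ → α} {π : Finset α}
    (h : ∀ A ∈ π, ∃ B ∈ π, R n c A B) :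
    π ⊆ {c 0, c 1} ∪ (π.filter (R n c (c 0)) ∪ π.filter (R n c (c 1))) := by
  intro A hA
  obtain ⟨B, hB, r⟩ := h A hA
  obtain ⟨j, hj, hnr, hcj⟩ := r.2.2.1 0 (by omega)
  have hj' : j = 0 ∨ j = 1 := by unfold nr at hnr; omega
  simp only [Finset.mem_union, Finset.mem_insert, Finset.mem_singleton, Finset.mem_filter]
  have := r.symm
  rcases hj' with rfl | rfl <;> rcases hcj with e | e <;> rw [e] <;> tauto

theorem le_six {α : Type*} {n : ℕ} (hn : 4 ≤ n) {c : ℕ → α} {π : Finset α}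
    (h : ∀ A ∈ π, ∃ B ∈ π, R n c A B) : π.card ≤ 6 := by
  classical
  have h1 := Finset.card_le_card (cover hn h)
  have h2 := Finset.card_union_le {c 0, c 1} (π.filter (R n c (c 0)) ∪ π.filter (R n c (c 1)))
  have h3 := Finset.card_union_le (π.filter (R n c (c 0))) (π.filter (R n c (c 1)))
  have h4 := partners_le (n := n) (c := c) π (c 0)
  have h5 := partners_le (n := n) (c := c) π (c 1)
  have h6 : ({c 0, c 1} : Finset α).card ≤ 2 := Finset.card_le_two
  omega

def cp (a b : Fin 6) : Bool :=
  ![![0,1,0,0,1,1], ![1,0,1,1,0,0], ![0,1,0,1,1,1], ![0,1,1,0,1,1], ![1,0,1,1,0,1], ![1,0,1,1,1,0]] a b == (1 : ℕ)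

def hit (l : List (Fin 6)) : Bool :=
  (l.contains 0 || (l.contains 2 && l.contains 3)) && (l.contains 1 || (l.contains 4 && l.contains 5))

def complete (w : List (Fin 6)) : Bool :=
  hit (w.take 2) && w.contains 2 && w.contains 3 && w.contains 4 && w.contains 5

def noExt : ℕ → List (Fin 6) → Bool
  | 0, w => !complete w
  | f+1, w => !complete w && (List.finRange 6).all fun x =>
      !(cp (w.headD 0) x && hit (x :: w.take 2)) || noExt f (x :: w)

theorem noExt_ok : noExt 7 [1, 0] = true := by decide +kernel

def pre (d : ℕ → Fin 6) : ℕ → List (Fin 6)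
  | 0 => []
  | m+1 => d m :: pre d m

theorem mem_pre {d : ℕ → Fin 6} {m k : ℕ} (h : k < m) : d k ∈ pre d m := by
  induction m with
  | zero => omega
  | succ m ih =>
    rcases Nat.lt_succ_iff_lt_or_eq.1 h with h | rfl
    · exact List.mem_cons_of_mem _ (ih h)
    · exact List.mem_cons_self

theorem search {n : ℕ} {d : ℕ → Fin 6} (hcp : ∀ k, k + 1 < n → cp (d k) (d (k+1)) = true)
    (hh : ∀ k, k + 2 < n → hit [d (k+2), d (k+1), d k] = true)
    (hc : complete (pre d n) = true) :
    ∀ f m, m + 2 ≤ n → n ≤ m + 2 + f → noExt f (pre d (m+2)) = true → False := by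
  intro f
  induction f with
  | zero =>
    intro m h1 h2 h
    obtain rfl : n = m + 2 := by omega
    simp [noExt, hc] at h
  | succ f ih =>
    intro m h1 h2 h
    rw [noExt, Bool.and_eq_true] at h
    obtain ⟨ha, hb⟩ := h
    by_cases e : n = m + 2
    · subst e; simp [hc] at ha
    · apply ih (m+1) (by omega) (by omega)
      rw [List.all_eq_true] at hb
      have := hb (d (m+2)) (List.mem_finRange _)
      have u1 := hcp (m+1) (by omega)
      have u2 := hh m (by omega)
      simp only [pre, List.headD_cons, List.take_succ_cons, List.take_zero] at this
      rw [u1, u2] at this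
      simpa [pre] using this

theorem le_five {α : Type*} {n : ℕ} (hn : 6 ≤ n) (hn9 : n ≤ 9) {c : ℕ → α} {π : Finset α}
    (hs : ∀ A ∈ π, ∃ k, k < n ∧ c k = A) (hcm : ∀ k, k < n → c k ∈ π)
    (h : ∀ A ∈ π, ∃ B ∈ π, R n c A B) : π.card ≤ 5 := by
  classical
  by_contra! h0
  have h1 := Finset.card_le_card (cover (by omega) h)
  have h2 := Finset.card_union_le {c 0, c 1} (π.filter (R n c (c 0)) ∪ π.filter (R n c (c 1)))
  have h3 := Finset.card_union_le (π.filter (R n c (c 0))) (π.filter (R n c (c 1)))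
  have h4 := partners_le (n := n) (c := c) π (c 0)
  have h5 := partners_le (n := n) (c := c) π (c 1)
  have h6 : ({c 0, c 1} : Finset α).card ≤ 2 := Finset.card_le_two
  obtain ⟨P, P', hPP, eP⟩ := Finset.card_eq_two.1 (show (π.filter (R n c (c 0))).card = 2 by omega)
  obtain ⟨Q, Q', hQQ, eQ⟩ := Finset.card_eq_two.1 (show (π.filter (R n c (c 1))).card = 2 by omega)
  have mP : P ∈ π ∧ R n c (c 0) P := by rw [← Finset.mem_filter, eP]; simp
  have mP' : P' ∈ π ∧ R n c (c 0) P' := by rw [← Finset.mem_filter, eP]; simp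
  have mQ : Q ∈ π ∧ R n c (c 1) Q := by rw [← Finset.mem_filter, eQ]; simp
  have mQ' : Q' ∈ π ∧ R n c (c 1) Q' := by rw [← Finset.mem_filter, eQ]; simp
  have hcov := cover (by omega) h
  rw [eP, eQ] at hcov
  obtain ⟨val, hval⟩ : ∃ val : Fin 6 → α, val = ![c 0, c 1, P, P', Q, Q'] := ⟨_, rfl⟩
  have hsub : π ⊆ Finset.univ.image val := by
    refine hcov.trans ?_
    intro A hA
    simp only [Finset.mem_union, Finset.mem_insert, Finset.mem_singleton] at hA
    simp only [Finset.mem_image, Finset.mem_univ, true_and, hval]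
    rcases hA with (rfl | rfl) | (rfl | rfl) | (rfl | rfl)
    exacts [⟨0, rfl⟩, ⟨1, rfl⟩, ⟨2, rfl⟩, ⟨3, rfl⟩, ⟨4, rfl⟩, ⟨5, rfl⟩]
  have inj : Function.Injective val := by
    have := Finset.card_le_card hsub
    have h7 : (Finset.univ.image val).card ≤ 6 := by
      simpa using Finset.card_image_le (s := (Finset.univ : Finset (Fin 6))) (f := val)
    have h8 : (Finset.univ.image val).card = (Finset.univ : Finset (Fin 6)).card := by
      simp only [Finset.card_univ, Fintype.card_fin]; omega
    have := Finset.card_image_iff.1 h8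
    simpa [Set.injOn_univ] using this
  have hd : ∀ k, ∃ i : Fin 6, k < n → c k = val i := by
    intro k
    by_cases hk : k < n
    · have := hsub (hcm k hk)
      simp only [Finset.mem_image, Finset.mem_univ, true_and] at this
      obtain ⟨i, hi⟩ := this
      exact ⟨i, fun _ => hi.symm⟩
    · exact ⟨0, fun h => absurd h hk⟩
  choose d hd using hd
  have v0 : val 0 = c 0 := by rw [hval]; rfl
  have v1 : val 1 = c 1 := by rw [hval]; rfl
  have v2 : val 2 = P := by rw [hval]; rfl
  have v3 : val 3 = P' := by rw [hval]; rfl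
  have v4 : val 4 = Q := by rw [hval]; rfl
  have v5 : val 5 = Q' := by rw [hval]; rfl
  have d0 : d 0 = 0 := inj (by rw [← hd 0 (by omega), v0])
  have d1 : d 1 = 1 := inj (by rw [← hd 1 (by omega), v1])
  have r02 : R n c (val 0) (val 2) := by rw [v0, v2]; exact mP.2
  have r03 : R n c (val 0) (val 3) := by rw [v0, v3]; exact mP'.2
  have r14 : R n c (val 1) (val 4) := by rw [v1, v4]; exact mQ.2
  have r15 : R n c (val 1) (val 5) := by rw [v1, v5]; exact mQ'.2
  have A : ∀ i j, R n c (val i) (val j) → ∀ k, k + 1 < n →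
      ¬ ((d k = i ∨ d k = j) ∧ (d (k+1) = i ∨ d (k+1) = j)) := by
    rintro i j r k hk ⟨a, b⟩
    refine r.2.1 k hk ?_ ?_
    · rw [hd k (by omega)]; rcases a with a | a <;> simp [a]
    · rw [hd (k+1) hk]; rcases b with a | a <;> simp [a]
  have B : ∀ i j, R n c (val i) (val j) → ∀ k, k < n → ∃ l, l < n ∧ nr l k ∧ (d l = i ∨ d l = j) := by
    intro i j r k hk
    obtain ⟨l, hl, hn, h⟩ := r.2.2.1 k hk
    rw [hd l hl, inj.eq_iff, inj.eq_iff] at h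
    exact ⟨l, hl, hn, h⟩
  have S : ∀ i : Fin 6, val i ∈ π → i ∈ pre d n := by
    intro i hi
    obtain ⟨k, hk, e⟩ := hs _ hi
    rw [hd k hk] at e
    rw [← inj e]; exact mem_pre hk
  refine search (n := n) (d := d) ?_ ?_ ?_ 7 0 (by omega) (by omega) ?_
  · intro k hk
    have a1 := A _ _ r02 k hk
    have a2 := A _ _ r03 k hk
    have a3 := A _ _ r14 k hk
    have a4 := A _ _ r15 k hk
    revert a1 a2 a3 a4
    generalize d k = x
    generalize d (k+1) = y
    revert x y; decide
  · intro k hk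
    have T : ∀ i j, R n c (val i) (val j) → (d (k+2) = i ∨ d (k+1) = i ∨ d k = i) ∨ (d (k+2) = j ∨ d (k+1) = j ∨ d k = j) := by
      intro i j r
      obtain ⟨l, hl, hn, h⟩ := B _ _ r (k+1) (by omega)
      have : l = k + 1 ∨ l = k ∨ l = k + 2 := by unfold nr at hn; omega
      rcases this with rfl | rfl | rfl <;> tauto
    have a1 := T _ _ r02
    have a2 := T _ _ r03
    have a3 := T _ _ r14
    have a4 := T _ _ r15
    revert a1 a2 a3 a4
    generalize d k = x
    generalize d (k+1) = y
    generalize d (k+2) = z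
    revert x y z; decide +kernel
  · obtain ⟨m, rfl⟩ : ∃ m, n = m + 2 := ⟨n - 2, by omega⟩
    have T : ∀ i j, R (m+2) c (val i) (val j) → (d (m+1) = i ∨ d m = i) ∨ (d (m+1) = j ∨ d m = j) := by
      intro i j r
      obtain ⟨l, hl, hn, h⟩ := B _ _ r (m+1) (by omega)
      have : l = m + 1 ∨ l = m := by unfold nr at hn; omega
      rcases this with rfl | rfl <;> tauto
    have a1 := T _ _ r02
    have a2 := T _ _ r03
    have a3 := T _ _ r14
    have a4 := T _ _ r15
    have s2 := S 2 (by rw [v2]; exact mP.1)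
    have s3 := S 3 (by rw [v3]; exact mP'.1)
    have s4 := S 4 (by rw [v4]; exact mQ.1)
    have s5 := S 5 (by rw [v5]; exact mQ'.1)
    have hh : hit ((pre d (m+2)).take 2) = true := by
      simp only [pre, List.take_succ_cons, List.take_zero]
      revert a1 a2 a3 a4
      generalize d m = x
      generalize d (m+1) = y
      revert x y; decide +kernel
    simp only [complete, hh, List.contains_iff_mem, s2, s3, s4, s5, Bool.and_eq_true, and_self]
  · simp only [pre]
    rw [d0, show d (0+1) = 1 from d1]
    exact noExt_ok

theorem ne_five {n : ℕ} (hn : n = 5) {α : Type*} {c : ℕ → α} {π : Finset α}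
    (hs : ∀ A ∈ π, ∃ k, k < n ∧ c k = A) (hcm : ∀ k, k < n → c k ∈ π)
    (h : ∀ A ∈ π, ∃ B ∈ π, R n c A B) : π.card ≠ 5 := by
  classical
  subst hn
  intro h5
  have e : π = (Finset.range 5).image c := by
    ext A
    simp only [Finset.mem_image, Finset.mem_range]
    exact ⟨hs A, fun ⟨k, hk, e⟩ => e ▸ hcm k hk⟩
  rw [e] at h5
  have inj := Finset.card_image_iff.1 (h5.trans (Finset.card_range 5).symm)
  obtain ⟨B, hB, r⟩ := h (c 2) (hcm 2 (by omega))
  obtain ⟨k, hk, rfl⟩ := hs B hB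
  have T : ∀ i, i < 5 → nr 2 i ∨ nr k i := by
    intro i hi
    obtain ⟨l, hl, hn, h⟩ := r.2.2.1 i hi
    rcases h with h | h
    · left; rwa [inj (by simpa using hl) (by simp) h] at hn
    · right; rwa [inj (by simpa using hl) (by simpa using hk) h] at hn
  have t0 := T 0 (by omega)
  have t4 := T 4 (by omega)
  unfold nr at t0 t4
  omega

/-- lower bound certificate -/
def Cert (n k : ℕ) (c : Fin n → Fin k) : Prop :=
  (∀ i, ∃ v, c v = i) ∧
  ∀ i, (∃ v, (∀ u, c u = i ↔ u = v) ∧ ∀ w : Fin n, nr v.1 w.1) ∨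
    ∃ j, j ≠ i ∧ (∀ u v : Fin n, u.1 + 1 = v.1 → (c u = i ∨ c u = j) → ¬ (c v = i ∨ c v = j)) ∧
      (∀ v : Fin n, ∃ u : Fin n, nr u.1 v.1 ∧ (c u = i ∨ c u = j)) ∧
      (∃ v : Fin n, ∀ u : Fin n, nr u.1 v.1 → c u ≠ i) ∧
      (∃ v : Fin n, ∀ u : Fin n, nr u.1 v.1 → c u ≠ j)

instance (n k : ℕ) (c : Fin n → Fin k) : Decidable (Cert n k c) := by unfold Cert; infer_instance

theorem cert_ok {n k : ℕ} {c : Fin n → Fin k} (h : Cert n k c) :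
    ∃ π : Finset (Finset (Fin n)), IsICPartition (SimpleGraph.pathGraph n) π ∧ π.card = k := by
  obtain ⟨hs, hc⟩ := h
  let F : Fin k → Finset (Fin n) := fun i => Finset.univ.filter (fun v => c v = i)
  have mF : ∀ i v, v ∈ F i ↔ c v = i := by intro i v; simp [F]
  have injF : Function.Injective F := by
    intro i j e
    obtain ⟨v, hv⟩ := hs i
    have := (mF i v).2 hv
    rw [e, mF] at this
    exact hv.symm.trans this
  have ndom : ∀ i, (∃ v : Fin n, ∀ u : Fin n, nr u.1 v.1 → c u ≠ i) →
      ¬ IndepDom (SimpleGraph.pathGraph n) (F i : Set (Fin n)) := by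
    rintro i ⟨v, hv⟩ ⟨-, hd⟩
    rcases hd v with h | ⟨u, hu, ha⟩
    · exact hv v (Or.inl rfl) ((mF i v).1 h)
    · refine hv u ?_ ((mF i u).1 hu)
      rw [SimpleGraph.pathGraph_adj] at ha; unfold nr; omega
  refine ⟨Finset.univ.image F, ⟨⟨?_, ?_⟩, ?_⟩, ?_⟩
  · intro A hA
    simp only [Finset.mem_image, Finset.mem_univ, true_and] at hA
    obtain ⟨i, rfl⟩ := hA
    obtain ⟨v, hv⟩ := hs i
    exact ⟨v, (mF i v).2 hv⟩
  · intro v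
    refine ⟨F (c v), ⟨Finset.mem_image_of_mem _ (Finset.mem_univ _), (mF _ v).2 rfl⟩, ?_⟩
    rintro A ⟨hA, hv⟩
    simp only [Finset.mem_image, Finset.mem_univ, true_and] at hA
    obtain ⟨i, rfl⟩ := hA
    rw [mF] at hv; rw [hv]
  · intro A hA
    simp only [Finset.mem_image, Finset.mem_univ, true_and] at hA
    obtain ⟨i, rfl⟩ := hA
    rcases hc i with ⟨v, hv, hd⟩ | ⟨j, hji, hi, hd, n1, n2⟩
    · left
      refine ⟨v, ?_, ?_⟩
      · ext u; simp only [Finset.mem_coe, mF, hv, Set.mem_singleton_iff]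
      · intro w
        have hvm : v ∈ (F i : Set (Fin n)) := by rw [Finset.mem_coe, mF, hv]
        by_cases e : v = w
        · left; rw [← e]; exact hvm
        · right; refine ⟨v, hvm, ?_⟩
          have := hd w
          rw [SimpleGraph.pathGraph_adj]
          rw [Fin.ext_iff] at e
          unfold nr at this; omega
    · right
      have I : IndepSet (SimpleGraph.pathGraph n) ((F i : Set (Fin n)) ∪ (F j : Set (Fin n))) := by
        intro u hu v hv ha
        simp only [Set.mem_union, Finset.mem_coe, mF] at hu hv
        rw [SimpleGraph.pathGraph_adj] at ha
        rcases ha with ha | ha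
        · exact hi u v ha hu hv
        · exact hi v u ha hv hu
      refine ⟨ndom i n1, F j, Finset.mem_image_of_mem _ (Finset.mem_univ _), fun e => hji (injF e), ?_, ?_, ?_,
        ndom i n1, ndom j n2, I, ?_⟩
      · rw [Set.disjoint_left]
        intro v h1 h2
        rw [Finset.mem_coe, mF] at h1 h2
        exact hji (h2.symm.trans h1)
      · intro u hu v hv; exact I (Or.inl hu) (Or.inl hv)
      · intro u hu v hv; exact I (Or.inr hu) (Or.inr hv)
      · intro v
        obtain ⟨u, hn, hu⟩ := hd v
        have hm : u ∈ (F i : Set (Fin n)) ∪ (F j : Set (Fin n)) := by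
          simpa only [Set.mem_union, Finset.mem_coe, mF] using hu
        by_cases e : u = v
        · left; rw [← e]; exact hm
        · right; refine ⟨u, hm, ?_⟩
          rw [SimpleGraph.pathGraph_adj]
          rw [Fin.ext_iff] at e
          unfold nr at hn; omega
  · rw [Finset.card_image_of_injective _ injF]; simp

theorem IC_eq {n k : ℕ} {c : Fin n → Fin k} (h : Cert n k c)
    (hu : ∀ π : Finset (Finset (Fin n)), IsICPartition (SimpleGraph.pathGraph n) π → π.card ≤ k) :
    IC (SimpleGraph.pathGraph n) = k := by
  apply IsGreatest.csSup_eq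
  refine ⟨cert_ok h, ?_⟩
  rintro m ⟨π, hπ, rfl⟩
  exact hu π hπ

def big (v : ℕ) : Fin 6 :=
  if v < 10 then ![0, 1, 2, 3, 1, 0, 4, 5, 0, 1] (Fin.ofNat 10 v) else if v % 2 = 0 then 0 else 1

theorem big_even {v : ℕ} (h : 10 ≤ v) (h2 : v % 2 = 0) : big v = 0 := by
  unfold big; rw [if_neg (by omega), if_pos h2]

theorem big_odd {v : ℕ} (h : 9 ≤ v) (h2 : v % 2 = 1) : big v = 1 := by
  by_cases e : v = 9
  · subst e; decide
  · unfold big; rw [if_neg (by omega), if_neg (by omega)]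

theorem big_cert {n : ℕ} (hn : 10 ≤ n) : Cert n 6 (fun v => big v.1) := by
  have good : ∀ x i j : Fin 6, ((x, i, j) = (0, 0, 2) ∨ (x, i, j) = (0, 0, 3) ∨ (x, i, j) = (1, 1, 4) ∨ (x, i, j) = (1, 1, 5)) →
      (∀ u v : Fin n, u.1 + 1 = v.1 → (big u = i ∨ big u = j) → ¬ (big v = i ∨ big v = j)) ∧
      (∀ v : Fin n, ∃ u : Fin n, nr u.1 v.1 ∧ (big u = i ∨ big u = j)) ∧
      (∃ v : Fin n, ∀ u : Fin n, nr u.1 v.1 → big u ≠ i) ∧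
      (∃ v : Fin n, ∀ u : Fin n, nr u.1 v.1 → big u ≠ j) := by
    intro x i j hx
    refine ⟨?_, ?_, ?_, ?_⟩
    · rintro ⟨u, hu⟩ ⟨v, hv⟩ (e : u + 1 = v)
      subst e
      simp only
      by_cases h9 : u < 9
      · have : ∀ x i j : Fin 6, ((x, i, j) = (0, 0, 2) ∨ (x, i, j) = (0, 0, 3) ∨ (x, i, j) = (1, 1, 4) ∨ (x, i, j) = (1, 1, 5)) →
          ∀ u < 9, (big u = i ∨ big u = j) → ¬ (big (u+1) = i ∨ big (u+1) = j) := by decide +kernel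
        exact this x i j hx u h9
      · have : (big u = 0 ∧ big (u+1) = 1) ∨ (big u = 1 ∧ big (u+1) = 0) := by
          rcases Nat.mod_two_eq_zero_or_one u with e | e
          · left; exact ⟨big_even (by omega) e, big_odd (by omega) (by omega)⟩
          · right; exact ⟨big_odd (by omega) e, big_even (by omega) (by omega)⟩
        revert this hx
        generalize big u = a
        generalize big (u+1) = b
        revert x i j a b; decide +kernel
    · rintro ⟨v, hv⟩
      by_cases h9 : v < 10
      · have : ∀ x i j : Fin 6, ((x, i, j) = (0, 0, 2) ∨ (x, i, j) = (0, 0, 3) ∨ (x, i, j) = (1, 1, 4) ∨ (x, i, j) = (1, 1, 5)) →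
          ∀ v < 10, ∃ u < 10, nr u v ∧ (big u = i ∨ big u = j) := by decide +kernel
        obtain ⟨u, hu, h⟩ := this x i j hx v h9
        exact ⟨⟨u, by omega⟩, h⟩
      · have : i = 0 ∨ i = 1 := by revert x i j; decide +kernel
        by_cases h10 : v = 10 ∧ i = 0
        · exact ⟨⟨v, hv⟩, Or.inl rfl, Or.inl (by rw [h10.2]; exact big_even (by simp; omega) (by simp; omega))⟩
        · rcases this with rfl | rfl
          · rcases Nat.mod_two_eq_zero_or_one v with e | e
            · exact ⟨⟨v, hv⟩, Or.inl rfl, Or.inl (big_even (by simp; omega) e)⟩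
            · exact ⟨⟨v-1, by omega⟩, Or.inr (Or.inl (by simp; omega)), Or.inl (big_even (by simp; omega) (by simp; omega))⟩
          · rcases Nat.mod_two_eq_zero_or_one v with e | e
            · exact ⟨⟨v-1, by omega⟩, Or.inr (Or.inl (by simp; omega)), Or.inl (big_odd (by simp; omega) (by simp; omega))⟩
            · exact ⟨⟨v, hv⟩, Or.inl rfl, Or.inl (big_odd (by simp; omega) e)⟩
    · have : ∀ x i j : Fin 6, ((x, i, j) = (0, 0, 2) ∨ (x, i, j) = (0, 0, 3) ∨ (x, i, j) = (1, 1, 4) ∨ (x, i, j) = (1, 1, 5)) →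
          ∃ v < 9, ∀ u < 10, nr u v → big u ≠ i := by decide +kernel
      obtain ⟨v, hv, h⟩ := this x i j hx
      refine ⟨⟨v, by omega⟩, fun u hu => h u ?_ hu⟩
      unfold nr at hu; simp at hu; omega
    · have : ∀ x i j : Fin 6, ((x, i, j) = (0, 0, 2) ∨ (x, i, j) = (0, 0, 3) ∨ (x, i, j) = (1, 1, 4) ∨ (x, i, j) = (1, 1, 5)) →
          ∃ v < 9, ∀ u < 10, nr u v → big u ≠ j := by decide +kernel
      obtain ⟨v, hv, h⟩ := this x i j hx
      refine ⟨⟨v, by omega⟩, fun u hu => h u ?_ hu⟩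
      unfold nr at hu; simp at hu; omega
  refine ⟨?_, ?_⟩
  · intro i
    have : ∀ i, ∃ v < 10, big v = i := by decide +kernel
    obtain ⟨v, hv, h⟩ := this i
    exact ⟨⟨v, by omega⟩, h⟩
  · intro i
    right
    have sw : ∀ i j : Fin 6, i ≠ j → 
      ((∀ u v : Fin n, u.1 + 1 = v.1 → (big u = i ∨ big u = j) → ¬ (big v = i ∨ big v = j)) ∧
      (∀ v : Fin n, ∃ u : Fin n, nr u.1 v.1 ∧ (big u = i ∨ big u = j)) ∧
      (∃ v : Fin n, ∀ u : Fin n, nr u.1 v.1 → big u ≠ i) ∧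
      (∃ v : Fin n, ∀ u : Fin n, nr u.1 v.1 → big u ≠ j)) → 
      (i ≠ j ∧ (∀ u v : Fin n, u.1 + 1 = v.1 → (big u = j ∨ big u = i) → ¬ (big v = j ∨ big v = i)) ∧
      (∀ v : Fin n, ∃ u : Fin n, nr u.1 v.1 ∧ (big u = j ∨ big u = i)) ∧
      (∃ v : Fin n, ∀ u : Fin n, nr u.1 v.1 → big u ≠ j) ∧
      (∃ v : Fin n, ∀ u : Fin n, nr u.1 v.1 → big u ≠ i)) := by
      rintro i j hij ⟨a, b, c, d⟩
      refine ⟨hij, fun u v h h1 h2 => a u v h h1.symm h2.symm, fun v => ?_, d, c⟩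
      obtain ⟨u, h, h'⟩ := b v
      exact ⟨u, h, h'.symm⟩
    fin_cases i
    · exact ⟨2, by decide, good 0 0 2 (by decide)⟩
    · exact ⟨4, by decide, good 1 1 4 (by decide)⟩
    · exact ⟨0, sw 0 2 (by decide) (good 0 0 2 (by decide))⟩
    · exact ⟨0, sw 0 3 (by decide) (good 0 0 3 (by decide))⟩
    · exact ⟨1, sw 1 4 (by decide) (good 1 1 4 (by decide))⟩
    · exact ⟨1, sw 1 5 (by decide) (good 1 1 5 (by decide))⟩

theorem stmt_9 (n : ℕ) :
    (n ≤ 4 → IC (SimpleGraph.pathGraph n) = n) ∧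
    (n = 5 → IC (SimpleGraph.pathGraph n) = 4) ∧
    (6 ≤ n → n ≤ 9 → IC (SimpleGraph.pathGraph n) = 5) ∧
    (10 ≤ n → IC (SimpleGraph.pathGraph n) = 6) := by
  refine ⟨?_, ?_, ?_, ?_⟩
  · intro hn
    have hu : ∀ π : Finset (Finset (Fin n)), IsICPartition (SimpleGraph.pathGraph n) π → π.card ≤ n :=
      fun π h => card_le h.1
    refine IC_eq (c := id) ?_ hu
    clear hu
    interval_cases n <;> decide +kernel
  · rintro rfl
    refine IC_eq (c := ![0, 1, 0, 2, 3]) (by decide +kernel) ?_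
    intro π h
    have h1 := card_le h.1
    obtain ⟨c, a, b, d⟩ := extract (by omega) h
    have h2 := ne_five rfl a b d
    omega
  · intro h6 h9
    have hu : ∀ π : Finset (Finset (Fin n)), IsICPartition (SimpleGraph.pathGraph n) π → π.card ≤ 5 := by
      intro π h
      obtain ⟨c, a, b, d⟩ := extract (by omega) h
      exact le_five h6 h9 a b d
    interval_cases n
    · exact IC_eq (c := ![0, 1, 2, 3, 4, 0]) (by decide +kernel) hu
    · exact IC_eq (c := ![0, 1, 0, 2, 3, 4, 1]) (by decide +kernel) hu
    · exact IC_eq (c := ![0, 1, 0, 1, 2, 3, 4, 0]) (by decide +kernel) hu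
    · exact IC_eq (c := ![0, 1, 0, 1, 0, 2, 3, 4, 1]) (by decide +kernel) hu
  · intro h10
    refine IC_eq (big_cert h10) ?_
    intro π h
    obtain ⟨c, a, b, d⟩ := extract (by omega) h
    exact le_six (by omega) d

end ICNL
end

section
/- Let G be a graph of order n ≥ 3. Then IC(G) = 3 if and only if G is isomorphic to K_3, or G is isomorphic to the star K_{1,n−1}, or G belongs to the family B_2, i.e., G is the disjoint union of a bipartite graph H with minimum degree δ(H) ≥ 1 and idomatic number id(H) = 2 together with a nonempty edgeless graph. -/
namespace ICNL

variable {V : Type*}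

/-- `π` is an idomatic partition of `G`: a partition of the vertex set into
independent dominating sets. -/
def IsIdomaticPartition (G : SimpleGraph V) (π : Finset (Finset V)) : Prop :=
  IsPartition π ∧ ∀ A ∈ π, IndepDom G (A : Set V)

/-- The idomatic number: the maximum number of classes of an idomatic partition of `G`. -/
noncomputable def idNum (G : SimpleGraph V) : ℕ :=
  sSup {k | ∃ π : Finset (Finset V), IsIdomaticPartition G π ∧ π.card = k}

/-- The star graph `K_{1,n-1}` on `n` vertices. -/
def starGraph (n : ℕ) : SimpleGraph (Fin n) :=
  SimpleGraph.fromRel (fun u _ => (u : ℕ) = 0)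

/-- `G` belongs to the family `B₂`: `G` is the disjoint union of a bipartite graph `H`
with minimum degree at least `1` and idomatic number `2`, together with a nonempty
edgeless graph. -/
def InB2 {U : Type*} (G : SimpleGraph U) : Prop :=
  ∃ (W : Type) (H : SimpleGraph W) (m : ℕ),
    1 ≤ m ∧ H.Colorable 2 ∧ (∀ v : W, ∃ w : W, H.Adj v w) ∧ idNum H = 2 ∧
    Nonempty (G ≃g (H ⊕g (⊥ : SimpleGraph (Fin m))))

theorem part_eq {V : Type*} {π : Finset (Finset V)} (h : IsPartition π) {A B : Finset V}
    (hA : A ∈ π) (hB : B ∈ π) {v : V} (h1 : v ∈ A) (h2 : v ∈ B) : A = B :=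
  (h.2 v).unique ⟨hA, h1⟩ ⟨hB, h2⟩

theorem part_ex {V : Type*} {π : Finset (Finset V)} (h : IsPartition π) (v : V) :
    ∃ A ∈ π, v ∈ A := by
  obtain ⟨A, h1, _⟩ := h.2 v
  exact ⟨A, h1.1, h1.2⟩

theorem part_mk {V : Type*} {π : Finset (Finset V)} (h1 : ∀ A ∈ π, A.Nonempty)
    (h2 : ∀ v : V, ∃ A ∈ π, v ∈ A)
    (h3 : ∀ A ∈ π, ∀ B ∈ π, ∀ v, v ∈ A → v ∈ B → A = B) : IsPartition π := by
  refine ⟨h1, fun v => ?_⟩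
  obtain ⟨A, hA, hv⟩ := h2 v
  exact ⟨A, ⟨hA, hv⟩, fun B hB => h3 B hB.1 A hA v hB.2 hv⟩

theorem sSup_eq_iff {V : Type*} [Finite V] (P : Finset (Finset V) → Prop) (k : ℕ) (hk : 0 < k) :
    sSup {j | ∃ π : Finset (Finset V), P π ∧ π.card = j} = k ↔
      (∃ π, P π ∧ π.card = k) ∧ ∀ π, P π → π.card ≤ k := by
  classical
  have := Fintype.ofFinite V
  have hb : BddAbove {j | ∃ π : Finset (Finset V), P π ∧ π.card = j} :=
    ⟨Fintype.card (Finset V), by rintro j ⟨π, _, rfl⟩; exact Finset.card_le_univ π⟩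
  constructor
  · intro h
    constructor
    · have hne : {j | ∃ π : Finset (Finset V), P π ∧ π.card = j}.Nonempty := by
        by_contra hh
        rw [Set.not_nonempty_iff_eq_empty] at hh
        rw [hh] at h
        simp at h
        omega
      have := Nat.sSup_mem hne hb
      rw [h] at this
      exact this
    · intro π hπ
      rw [← h]
      exact le_csSup hb ⟨π, hπ, rfl⟩
  · rintro ⟨h1, h2⟩
    apply le_antisymm
    · apply csSup_le ⟨k, h1⟩
      rintro j ⟨π, hπ, rfl⟩
      exact h2 π hπ
    · exact le_csSup hb h1

theorem IC_eq_iff {V : Type*} [Finite V] (G : SimpleGraph V) (k : ℕ) (hk : 0 < k) :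
    IC G = k ↔ (∃ π, IsICPartition G π ∧ π.card = k) ∧ ∀ π, IsICPartition G π → π.card ≤ k :=
  sSup_eq_iff _ k hk

theorem id_eq_iff {V : Type*} [Finite V] (G : SimpleGraph V) (k : ℕ) (hk : 0 < k) :
    idNum G = k ↔ (∃ π, IsIdomaticPartition G π ∧ π.card = k) ∧
      ∀ π, IsIdomaticPartition G π → π.card ≤ k :=
  sSup_eq_iff _ k hk

theorem part_card_s14 {V : Type*} [Fintype V] {π : Finset (Finset V)} (h : IsPartition π) :
    π.card ≤ Fintype.card V := by
  classical
  have h1 : ∀ A : Finset V, ∃ v : V ⊕ Unit, A ∈ π → ∃ u ∈ A, v = Sum.inl u := by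
    intro A
    by_cases hA : A ∈ π
    · obtain ⟨v, hv⟩ := h.1 A hA
      exact ⟨Sum.inl v, fun _ => ⟨v, hv, rfl⟩⟩
    · exact ⟨Sum.inr (), fun h => absurd h hA⟩
  choose f hf using h1
  have : π.card ≤ ((Finset.univ : Finset V).map Function.Embedding.inl : Finset (V ⊕ Unit)).card := by
    apply Finset.card_le_card_of_injOn f
    · intro A hA
      obtain ⟨u, _, hu⟩ := hf A hA
      simp [hu]
    · intro A hA B hB hAB
      obtain ⟨u, hu1, hu⟩ := hf A hA
      obtain ⟨w, hw1, hw⟩ := hf B hB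
      have : u = w := by
        have : (Sum.inl u : V ⊕ Unit) = Sum.inl w := by rw [← hu, ← hw, hAB]
        simpa using this
      subst this
      exact part_eq h hA hB hu1 hw1
  simpa using this

section iso
variable {V W : Type*} {G : SimpleGraph V} {K : SimpleGraph W}

theorem dom_iso (e : G ≃g K) (S : Set V) : Dominating K (e '' S) ↔ Dominating G S := by
  constructor
  · intro h v
    rcases h (e v) with ⟨u, hu, h1⟩ | ⟨_, ⟨u, hu, rfl⟩, h2⟩
    · left; rwa [← e.injective h1]
    · right; exact ⟨u, hu, e.map_adj_iff.1 h2⟩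
  · intro h w
    rcases h (e.symm w) with h1 | ⟨u, hu, h2⟩
    · left; exact ⟨_, h1, by simp⟩
    · right; refine ⟨e u, ⟨u, hu, rfl⟩, ?_⟩
      have := e.map_adj_iff.2 h2
      simpa using this

theorem indep_iso (e : G ≃g K) (S : Set V) : IndepSet K (e '' S) ↔ IndepSet G S := by
  constructor
  · intro h u hu v hv huv
    exact h ⟨u, hu, rfl⟩ ⟨v, hv, rfl⟩ (e.map_adj_iff.2 huv)
  · rintro h _ ⟨u, hu, rfl⟩ _ ⟨v, hv, rfl⟩ huv
    exact h hu hv (e.map_adj_iff.1 huv)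

theorem indepDom_iso (e : G ≃g K) (S : Set V) : IndepDom K (e '' S) ↔ IndepDom G S := by
  rw [IndepDom, IndepDom, dom_iso, indep_iso]

theorem ic_iso (e : G ≃g K) (π : Finset (Finset V)) (h : IsICPartition G π) :
    ∃ π' : Finset (Finset W), IsICPartition K π' ∧ π'.card = π.card := by
  classical
  refine ⟨π.map (Finset.mapEmbedding e.toEquiv.toEmbedding).toEmbedding, ⟨part_mk ?_ ?_ ?_, ?_⟩,
    by simp⟩
  · intro A hA
    simp only [Finset.mem_map] at hA
    obtain ⟨B, hB, rfl⟩ := hA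
    simpa using h.1.1 B hB
  · intro w
    obtain ⟨A, hA, hw⟩ := part_ex h.1 (e.symm w)
    refine ⟨_, Finset.mem_map_of_mem _ hA, ?_⟩
    simp only [RelEmbedding.coe_toEmbedding, Finset.mapEmbedding_apply, Finset.mem_map]
    exact ⟨_, hw, by simp⟩
  · intro A hA B hB w hw1 hw2
    simp only [Finset.mem_map] at hA hB
    obtain ⟨A, hA, rfl⟩ := hA
    obtain ⟨B, hB, rfl⟩ := hB
    simp only [RelEmbedding.coe_toEmbedding, Finset.mapEmbedding_apply, Finset.mem_map] at hw1 hw2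
    obtain ⟨u, hu, rfl⟩ := hw1
    obtain ⟨v, hv, hh⟩ := hw2
    have : v = u := by simpa using hh
    subst this
    rw [part_eq h.1 hA hB hu hv]
  · have hc : ∀ A : Finset V, (((Finset.mapEmbedding e.toEquiv.toEmbedding).toEmbedding A : Finset W) : Set W)
        = e '' (A : Set V) := by
      intro A; simp
    intro A hA
    simp only [Finset.mem_map] at hA
    obtain ⟨A, hA, rfl⟩ := hA
    rcases h.2 A hA with ⟨v, hv, hd⟩ | ⟨hn, B, hB, hBA, h1, h2, h3, h4, h5, h6⟩
    · left
      refine ⟨e v, ?_, ?_⟩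
      · rw [hc, hv]; simp
      · rw [hc, dom_iso]; exact hd
    · right
      rw [hc, indepDom_iso]
      refine ⟨hn, _, Finset.mem_map_of_mem _ hB, ?_, ?_⟩
      · intro hh; exact hBA (Function.Embedding.injective _ hh)
      · rw [hc]
        refine ⟨(Set.disjoint_image_iff e.injective).2 h1, (indep_iso _ _).2 h2, (indep_iso _ _).2 h3,
          fun h => h4 ((indepDom_iso _ _).1 h), fun h => h5 ((indepDom_iso _ _).1 h), ?_⟩
        rw [← Set.image_union]
        exact (indepDom_iso _ _).2 h6

theorem IC_iso (e : G ≃g K) : IC G = IC K := by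
  unfold IC
  congr 1
  ext k
  constructor
  · rintro ⟨π, h, rfl⟩
    exact ic_iso e π h
  · rintro ⟨π, h, rfl⟩
    exact ic_iso e.symm π h

end iso

section sum
variable {W : Type*} (H : SimpleGraph W) (m : ℕ)

theorem up (hm : 1 ≤ m) [Nonempty W] (ρ : Finset (Finset W)) (h : IsIdomaticPartition H ρ) :
    ∃ π, IsICPartition (H ⊕g (⊥ : SimpleGraph (Fin m))) π ∧ π.card = ρ.card + 1 := by
  classical
  obtain ⟨w0⟩ := ‹Nonempty W›
  obtain ⟨B0, hB0, hw0⟩ := part_ex h.1 w0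
  have i0 : Fin m := ⟨0, hm⟩
  set I : Finset (W ⊕ Fin m) := Finset.univ.map Function.Embedding.inr with hI
  set φ : Finset W → Finset (W ⊕ Fin m) := fun B => B.map Function.Embedding.inl with hφ
  have mI : ∀ x, x ∈ I ↔ ∃ i, x = Sum.inr i := by intro x; simp [hI, eq_comm]
  have mφ : ∀ B x, x ∈ φ B ↔ ∃ w ∈ B, x = Sum.inl w := by intro B x; simp [hφ, eq_comm]
  have hne : ∀ B, φ B ≠ I := by
    intro B hB
    have : Sum.inr i0 ∈ φ B := by rw [hB, mI]; exact ⟨_, rfl⟩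
    rw [mφ] at this
    simp at this
  have hInd : ¬ IndepDom (H ⊕g (⊥ : SimpleGraph (Fin m))) (I : Set (W ⊕ Fin m)) := by
    rintro ⟨_, hd⟩
    rcases hd (Sum.inl w0) with h1 | ⟨u, hu, h1⟩
    · rw [Finset.mem_coe, mI] at h1; simp at h1
    · rw [Finset.mem_coe, mI] at hu
      obtain ⟨i, rfl⟩ := hu
      simp at h1
  have hBnd : ∀ B, ¬ IndepDom (H ⊕g (⊥ : SimpleGraph (Fin m))) (φ B : Set (W ⊕ Fin m)) := by
    rintro B ⟨_, hd⟩
    rcases hd (Sum.inr i0) with h1 | ⟨u, hu, h1⟩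
    · rw [Finset.mem_coe, mφ] at h1; simp at h1
    · rw [Finset.mem_coe, mφ] at hu
      obtain ⟨i, _, rfl⟩ := hu
      simp at h1
  have hco : ∀ B ∈ ρ, ICCoalition (H ⊕g (⊥ : SimpleGraph (Fin m))) (I : Set (W ⊕ Fin m)) (φ B) := by
    intro B hB
    obtain ⟨hi, hd⟩ := h.2 B hB
    have hu : IndepSet (H ⊕g (⊥ : SimpleGraph (Fin m))) ((I : Set (W ⊕ Fin m)) ∪ φ B) := by
      intro u hu v hv huv
      simp only [Set.mem_union, Finset.mem_coe, mI, mφ] at hu hv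
      rcases hu with ⟨i, rfl⟩ | ⟨u, hu, rfl⟩ <;> rcases hv with ⟨j, rfl⟩ | ⟨v, hv, rfl⟩
      · simp at huv
      · simp at huv
      · simp at huv
      · exact hi hu hv (by simpa using huv)
    refine ⟨?_, fun u hu' v hv => hu (Or.inl hu') (Or.inl hv),
      fun u hu' v hv => hu (Or.inr hu') (Or.inr hv), hInd, hBnd B, hu, ?_⟩
    · rw [Set.disjoint_left]
      intro x hx hx'
      rw [Finset.mem_coe, mI] at hx
      rw [Finset.mem_coe, mφ] at hx'
      obtain ⟨i, rfl⟩ := hx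
      simp at hx'
    · rintro (w | i)
      · rcases hd w with h1 | ⟨u, hu, h1⟩
        · left; right; rw [Finset.mem_coe, mφ]; exact ⟨w, h1, rfl⟩
        · right; refine ⟨Sum.inl u, Or.inr ?_, by simpa using h1⟩
          rw [Finset.mem_coe, mφ]; exact ⟨u, hu, rfl⟩
      · left; left; rw [Finset.mem_coe, mI]; exact ⟨i, rfl⟩
  refine ⟨insert I (ρ.image φ), ⟨part_mk ?_ ?_ ?_, ?_⟩, ?_⟩
  · intro A hA
    simp only [Finset.mem_insert, Finset.mem_image] at hA
    rcases hA with rfl | ⟨B, hB, rfl⟩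
    · exact ⟨Sum.inr i0, by rw [mI]; exact ⟨_, rfl⟩⟩
    · simpa [hφ] using h.1.1 B hB
  · rintro (w | i)
    · obtain ⟨B, hB, hw⟩ := part_ex h.1 w
      exact ⟨φ B, Finset.mem_insert_of_mem (Finset.mem_image_of_mem _ hB), (mφ _ _).2 ⟨w, hw, rfl⟩⟩
    · exact ⟨I, Finset.mem_insert_self _ _, (mI _).2 ⟨i, rfl⟩⟩
  · intro A hA B hB v hvA hvB
    simp only [Finset.mem_insert, Finset.mem_image] at hA hB
    rcases hA with rfl | ⟨A, hA, rfl⟩ <;> rcases hB with rfl | ⟨B, hB, rfl⟩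
    · rfl
    · rw [mI] at hvA; obtain ⟨i, rfl⟩ := hvA
      rw [mφ] at hvB; simp at hvB
    · rw [mI] at hvB; obtain ⟨i, rfl⟩ := hvB
      rw [mφ] at hvA; simp at hvA
    · rw [mφ] at hvA hvB
      obtain ⟨a, ha, rfl⟩ := hvA
      obtain ⟨b, hb, hab⟩ := hvB
      have : a = b := by simpa using hab
      subst this
      rw [part_eq h.1 hA hB ha hb]
  · intro A hA
    right
    simp only [Finset.mem_insert, Finset.mem_image] at hA
    rcases hA with rfl | ⟨A, hA, rfl⟩
    · exact ⟨hInd, φ B0, Finset.mem_insert_of_mem (Finset.mem_image_of_mem _ hB0), hne B0, hco B0 hB0⟩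
    · refine ⟨hBnd A, I, Finset.mem_insert_self _ _, (hne A).symm, ?_⟩
      obtain ⟨h1, h2, h3, h4, h5, h6⟩ := hco A hA
      exact ⟨h1.symm, h3, h2, h5, h4, by rwa [Set.union_comm]⟩
  · rw [Finset.card_insert_of_notMem, Finset.card_image_of_injective]
    · exact Finset.map_injective _
    · simp only [Finset.mem_image, not_exists, not_and]
      intro B _; exact hne B

theorem down (hm : 1 ≤ m) [Nonempty W] (hH : ∀ v, ∃ w, H.Adj v w)
    (π : Finset (Finset (W ⊕ Fin m))) (h : IsICPartition (H ⊕g (⊥ : SimpleGraph (Fin m))) π) :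
    ∃ ρ, IsIdomaticPartition H ρ ∧ π.card = ρ.card + 1 := by
  classical
  obtain ⟨w0⟩ := ‹Nonempty W›
  have i0 : Fin m := ⟨0, hm⟩
  have hinr : ∀ (S : Set (W ⊕ Fin m)), Dominating (H ⊕g (⊥ : SimpleGraph (Fin m))) S →
      ∀ i, Sum.inr i ∈ S := by
    intro S hS i
    rcases hS (Sum.inr i) with h1 | ⟨u, hu, h1⟩
    · exact h1
    · rcases u with u | u <;> simp at h1
  have hpart : ∀ A ∈ π, ∃ B ∈ π, B ≠ A ∧ ICCoalition (H ⊕g (⊥ : SimpleGraph (Fin m))) (A : Set _) (B : Set _) := by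
    intro A hA
    rcases h.2 A hA with ⟨v, hv, hd⟩ | ⟨_, h2⟩
    · exfalso
      rw [hv] at hd
      have := hinr _ hd i0
      simp only [Set.mem_singleton_iff] at this
      subst this
      rcases hd (Sum.inl w0) with h1 | ⟨u, hu, h1⟩
      · simp at h1
      · simp only [Set.mem_singleton_iff] at hu
        subst hu; simp at h1
    · exact h2
  obtain ⟨A0, hA0, hi0⟩ := part_ex h.1 (Sum.inr i0 : W ⊕ Fin m)
  have hU : ∀ B ∈ π, B ≠ A0 → IndepDom (H ⊕g (⊥ : SimpleGraph (Fin m))) ((A0 : Set _) ∪ B) := by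
    intro B hB hne
    obtain ⟨C, hC, _, _, _, _, _, _, h6⟩ := hpart B hB
    rcases hinr _ h6.2 i0 with h1 | h1
    · exact absurd (part_eq h.1 hB hA0 h1 hi0) hne
    · have := part_eq h.1 hC hA0 h1 hi0
      subst this
      rwa [Set.union_comm]
  have hA0i : IndepSet (H ⊕g (⊥ : SimpleGraph (Fin m))) (A0 : Set _) := by
    obtain ⟨C, hC, _, _, h1, _⟩ := hpart A0 hA0
    exact h1
  have hl : ∀ w, Sum.inl w ∉ A0 := by
    intro w hw
    obtain ⟨w', hw'⟩ := hH w
    have hadj : (H ⊕g (⊥ : SimpleGraph (Fin m))).Adj (Sum.inl w) (Sum.inl w') := by simpa using hw'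
    obtain ⟨B, hB, hwB⟩ := part_ex h.1 (Sum.inl w' : W ⊕ Fin m)
    by_cases hBA : B = A0
    · subst hBA
      exact hA0i hw hwB hadj
    · exact (hU B hB hBA).1 (Or.inl hw) (Or.inr hwB) hadj
  have hr : ∀ i, Sum.inr i ∈ A0 := by
    intro i
    by_contra hi
    obtain ⟨w', hw'⟩ := hH w0
    have hadj : (H ⊕g (⊥ : SimpleGraph (Fin m))).Adj (Sum.inl w0) (Sum.inl w') := by simpa using hw'
    obtain ⟨B, hB, hwB⟩ := part_ex h.1 (Sum.inl w0 : W ⊕ Fin m)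
    obtain ⟨C, hC, hwC⟩ := part_ex h.1 (Sum.inl w' : W ⊕ Fin m)
    have hBA : B ≠ A0 := by rintro rfl; exact hl _ hwB
    have hCA : C ≠ A0 := by rintro rfl; exact hl _ hwC
    have h1 := hU B hB hBA
    have h2 := hU C hC hCA
    have h3 : Sum.inr i ∈ B := (hinr _ h1.2 i).resolve_left hi
    have h4 : Sum.inr i ∈ C := (hinr _ h2.2 i).resolve_left hi
    have := part_eq h.1 hB hC h3 h4
    subst this
    exact h1.1 (Or.inr hwB) (Or.inr hwC) hadj
  have hBl : ∀ B ∈ π, B ≠ A0 → ∀ i, Sum.inr i ∉ B := by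
    intro B hB hne i hi
    exact hne (part_eq h.1 hB hA0 hi (hr i))
  have hBe : ∀ B ∈ π, B ≠ A0 → ∃ w, Sum.inl w ∈ B := by
    intro B hB hne
    obtain ⟨w | i, hx⟩ := h.1.1 B hB
    · exact ⟨w, hx⟩
    · exact absurd hx (hBl B hB hne i)
  refine ⟨(π.erase A0).image Finset.toLeft, ⟨part_mk ?_ ?_ ?_, ?_⟩, ?_⟩
  · intro A hA
    simp only [Finset.mem_image, Finset.mem_erase] at hA
    obtain ⟨B, ⟨hne, hB⟩, rfl⟩ := hA
    obtain ⟨w, hw⟩ := hBe B hB hne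
    exact ⟨w, by simpa using hw⟩
  · intro w
    obtain ⟨B, hB, hwB⟩ := part_ex h.1 (Sum.inl w : W ⊕ Fin m)
    have hBA : B ≠ A0 := by rintro rfl; exact hl _ hwB
    exact ⟨_, Finset.mem_image_of_mem _ (Finset.mem_erase.2 ⟨hBA, hB⟩), by simpa using hwB⟩
  · intro A hA B hB v hvA hvB
    simp only [Finset.mem_image, Finset.mem_erase] at hA hB
    obtain ⟨A, ⟨_, hA⟩, rfl⟩ := hA
    obtain ⟨B, ⟨_, hB⟩, rfl⟩ := hB
    rw [Finset.mem_toLeft] at hvA hvB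
    rw [part_eq h.1 hA hB hvA hvB]
  · intro A hA
    simp only [Finset.mem_image, Finset.mem_erase] at hA
    obtain ⟨B, ⟨hne, hB⟩, rfl⟩ := hA
    obtain ⟨hi, hd⟩ := hU B hB hne
    constructor
    · intro u hu v hv huv
      rw [Finset.mem_coe, Finset.mem_toLeft] at hu hv
      exact hi (Or.inr hu) (Or.inr hv) (by simpa using huv)
    · intro w
      rcases hd (Sum.inl w) with h1 | ⟨u, hu, h1⟩
      · left
        rw [Finset.mem_coe, Finset.mem_toLeft]
        exact h1.resolve_left (hl w)
      · right
        rcases u with u | u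
        · refine ⟨u, ?_, by simpa using h1⟩
          rw [Finset.mem_coe, Finset.mem_toLeft]
          exact hu.resolve_left (hl u)
        · simp at h1
  · rw [Finset.card_image_of_injOn, Finset.card_erase_of_mem hA0]
    · have : 0 < π.card := Finset.card_pos.2 ⟨_, hA0⟩
      omega
    · intro A hA B hB hAB
      simp only [Finset.coe_erase, Set.mem_sdiff, Finset.mem_coe, Set.mem_singleton_iff] at hA hB
      obtain ⟨w, hw⟩ := hBe A hA.1 hA.2
      have : w ∈ Finset.toLeft A := by simpa using hw
      have h2 : w ∈ Finset.toLeft B := by rw [← show A.toLeft = B.toLeft from hAB]; exact this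
      exact part_eq h.1 hA.1 hB.1 hw (by simpa using h2)

theorem sum_iff [Finite W] (hm : 1 ≤ m) [Nonempty W] (hH : ∀ v, ∃ w, H.Adj v w) :
    IC (H ⊕g (⊥ : SimpleGraph (Fin m))) = 3 ↔ idNum H = 2 := by
  rw [IC_eq_iff _ _ (by norm_num), id_eq_iff _ _ (by norm_num)]
  constructor
  · rintro ⟨⟨π, h1, h2⟩, h3⟩
    constructor
    · obtain ⟨ρ, h4, h5⟩ := down H m hm hH π h1
      exact ⟨ρ, h4, by omega⟩
    · intro ρ hρ
      obtain ⟨π, h4, h5⟩ := up H m hm ρ hρ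
      have := h3 π h4
      omega
  · rintro ⟨⟨π, h1, h2⟩, h3⟩
    constructor
    · obtain ⟨ρ, h4, h5⟩ := up H m hm π h1
      exact ⟨ρ, h4, by omega⟩
    · intro ρ hρ
      obtain ⟨π, h4, h5⟩ := down H m hm hH ρ hρ
      have := h3 π h4
      omega

end sum

theorem star_adj (n : ℕ) (u v : Fin n) :
    (starGraph n).Adj u v ↔ u ≠ v ∧ ((u : ℕ) = 0 ∨ (v : ℕ) = 0) := Iff.rfl

theorem logic_end {sA sB sC iA iB iC uAB uAC uBC K S T : Prop}
    (hA : sA ∨ (¬ iB ∧ uAB) ∨ (¬ iC ∧ uAC)) (hB : sB ∨ (¬ iA ∧ uAB) ∨ (¬ iC ∧ uBC))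
    (hC : sC ∨ (¬ iA ∧ uAC) ∨ (¬ iB ∧ uBC)) (h1 : sA → iA) (h2 : sB → iB) (h3 : sC → iC)
    (k : sA → sB → sC → K) (s1 : sA → uBC → S) (s2 : sB → uAC → S) (s3 : sC → uAB → S)
    (b1 : uAB → uAC → T) (b2 : uAB → uBC → T) (b3 : uAC → uBC → T) : K ∨ S ∨ T := by
  grind

theorem star_iff {V : Type*} [Fintype V] (G : SimpleGraph V) (n : ℕ)
    (hn : Fintype.card V = n) (h3 : 3 ≤ n) :
    Nonempty (G ≃g starGraph n) ↔ ∃ c, ∀ u v, G.Adj u v ↔ u ≠ v ∧ (u = c ∨ v = c) := by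
  classical
  have hz : 0 < n := by omega
  constructor
  · rintro ⟨e⟩
    refine ⟨e.symm ⟨0, hz⟩, fun u v => ?_⟩
    rw [← e.map_adj_iff, star_adj]
    have h1 : ∀ u, u = e.symm ⟨0, hz⟩ ↔ ((e u : Fin n) : ℕ) = 0 := by
      intro u
      rw [← e.injective.eq_iff]
      simp [Fin.ext_iff]
    rw [h1, h1]
    simp
  · rintro ⟨c, hc⟩
    let e0 : V ≃ Fin n := Fintype.equivFinOfCardEq hn
    let e : V ≃ Fin n := e0.trans (Equiv.swap (e0 c) ⟨0, hz⟩)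
    have hec : e c = ⟨0, hz⟩ := by simp [e]
    have h1 : ∀ u, u = c ↔ ((e u : Fin n) : ℕ) = 0 := by
      intro u
      rw [← e.injective.eq_iff, hec]
      simp [Fin.ext_iff]
    refine ⟨⟨e, ?_⟩⟩
    intro u v
    rw [hc, star_adj, h1, h1]
    simp

theorem star_IC {V : Type*} [Fintype V] (G : SimpleGraph V) (h3 : 3 ≤ Fintype.card V)
    (c : V) (hc : ∀ u v, G.Adj u v ↔ u ≠ v ∧ (u = c ∨ v = c)) : IC G = 3 := by
  classical
  have hthird : ∀ x y : V, ∃ z, z ≠ x ∧ z ≠ y := by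
    intro x y
    by_contra hh
    push Not at hh
    have : (Finset.univ : Finset V) ⊆ {x, y} := by
      intro z _
      by_cases hz : z = x
      · simp [hz]
      · simp [hh z hz]
    have h1 := Finset.card_le_card this
    have h2 : ({x, y} : Finset V).card ≤ 2 := Finset.card_le_two
    rw [Finset.card_univ] at h1
    omega
  have hcd : IndepDom G {c} := by
    constructor
    · intro u hu v hv
      simp only [Set.mem_singleton_iff] at hu hv
      subst hu; subst hv; simp
    · intro v
      by_cases hv : v = c
      · left; exact hv
      · right; exact ⟨c, rfl, (hc _ _).2 ⟨Ne.symm hv, Or.inl rfl⟩⟩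
  have hleaf : ∀ S : Set V, c ∉ S → Dominating G S → ∀ v, v ≠ c → v ∈ S := by
    intro S hS hd v hv
    rcases hd v with h | ⟨u, hu, h⟩
    · exact h
    · rw [hc] at h
      rcases h.2 with rfl | rfl
      · exact absurd hu hS
      · exact absurd rfl hv
  have hind : ∀ S : Set V, c ∉ S → IndepSet G S := by
    intro S hS u hu v hv huv
    rw [hc] at huv
    rcases huv.2 with rfl | rfl
    · exact hS hu
    · exact hS hv
  rw [IC_eq_iff _ _ (by norm_num)]
  constructor
  · obtain ⟨a, hac, _⟩ := hthird c c
    obtain ⟨b, hbc, hba⟩ := hthird c a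
    set C : Finset V := Finset.univ \ {c, a} with hC
    have mC : ∀ x, x ∈ C ↔ x ≠ c ∧ x ≠ a := by intro x; simp [hC]
    have hna : ¬ IndepDom G (({a} : Finset V) : Set V) := by
      rintro ⟨_, hd⟩
      have := hleaf _ (by simpa using hac.symm) hd b hbc
      exact hba (by simpa using this)
    have hnC : ¬ IndepDom G (C : Set V) := by
      rintro ⟨_, hd⟩
      have := hleaf _ (by simp [mC]) hd a hac
      simp [mC] at this
    have hun : IndepDom G ((({a} : Finset V) : Set V) ∪ C) := by
      refine ⟨hind _ (by simp [mC, hac.symm]), ?_⟩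
      intro v
      by_cases hv : v = c
      · right
        refine ⟨a, Or.inl (by simp), (hc _ _).2 ⟨by rw [hv]; exact hac, Or.inr hv⟩⟩
      · left
        by_cases hva : v = a
        · left; simp [hva]
        · right; simp [mC, hv, hva]
    have hdis : Disjoint (({a} : Finset V) : Set V) (C : Set V) := by
      simp [mC]
    have hCa : C ≠ {a} := by
      intro h
      have : b ∈ C := (mC b).2 ⟨hbc, hba⟩
      rw [h] at this
      exact hba (by simpa using this)
    have hCc : C ≠ {c} := by
      intro h
      have : b ∈ C := (mC b).2 ⟨hbc, hba⟩
      rw [h] at this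
      exact hbc (by simpa using this)
    have hca : ({c} : Finset V) ≠ {a} := by
      intro h; exact hac.symm (by simpa using h)
    refine ⟨{{c}, {a}, C}, ⟨part_mk ?_ ?_ ?_, ?_⟩, Finset.card_eq_three.2 ⟨_, _, _, hca, hCc.symm, hCa.symm, rfl⟩⟩
    · intro A hA
      simp only [Finset.mem_insert, Finset.mem_singleton] at hA
      rcases hA with rfl | rfl | rfl
      · simp
      · simp
      · exact ⟨b, (mC b).2 ⟨hbc, hba⟩⟩
    · intro v
      by_cases hv : v = c
      · exact ⟨{c}, by simp, by simp [hv]⟩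
      · by_cases hva : v = a
        · exact ⟨{a}, by simp, by simp [hva]⟩
        · exact ⟨C, by simp, (mC v).2 ⟨hv, hva⟩⟩
    · intro A hA B hB v hvA hvB
      simp only [Finset.mem_insert, Finset.mem_singleton] at hA hB
      rcases hA with rfl | rfl | rfl <;> rcases hB with rfl | rfl | rfl <;> grind
    · intro A hA
      simp only [Finset.mem_insert, Finset.mem_singleton] at hA
      rcases hA with rfl | rfl | rfl
      · left; exact ⟨c, by simp, by simpa using hcd.2⟩
      · right
        exact ⟨hna, C, by simp, hCa, hdis, hind _ (by simpa using hac.symm), hind _ (by simp [mC]), hna, hnC, hun⟩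
      · right
        exact ⟨hnC, {a}, by simp, hCa.symm, hdis.symm, hind _ (by simp [mC]), hind _ (by simpa using hac.symm), hnC, hna,
          by rwa [Set.union_comm]⟩
  · intro π h
    obtain ⟨A0, hA0, hcA⟩ := part_ex h.1 c
    have hA0c : A0 = {c} := by
      rcases h.2 A0 hA0 with ⟨v, hv, _⟩ | ⟨_, B, _, _, _, h1, _⟩
      · have h1 : A0 = {v} := by exact_mod_cast hv
        subst h1
        rw [Finset.mem_singleton] at hcA
        rw [hcA]
      · apply Finset.eq_singleton_iff_unique_mem.2 ⟨hcA, ?_⟩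
        intro x hx
        by_contra hxc
        exact h1 hcA hx ((hc _ _).2 ⟨Ne.symm hxc, Or.inl rfl⟩)
    by_cases hone : ∃ A ∈ π, A ≠ A0
    · obtain ⟨A, hA, hne⟩ := hone
      have hcnA : c ∉ A := fun hh => hne (part_eq h.1 hA hA0 hh hcA)
      rcases h.2 A hA with ⟨v, hv, hd⟩ | ⟨_, B, hB, _, _, _, _, _, hnB, hu⟩
      · exfalso
        obtain ⟨z, hzc, hzv⟩ := hthird c v
        have := hleaf _ (by simpa using hcnA) hd z hzc
        rw [hv] at this
        exact hzv this
      · have hcnB : c ∉ B := by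
          intro hh
          have := part_eq h.1 hB hA0 hh hcA
          subst this
          subst hA0c
          exact hnB (by simpa using hcd)
        have hsub : π ⊆ {A0, A, B} := by
          intro D hD
          simp only [Finset.mem_insert, Finset.mem_singleton]
          obtain ⟨d, hd⟩ := h.1.1 D hD
          by_cases hdc : d = c
          · subst hdc
            left; exact part_eq h.1 hD hA0 hd hcA
          · rcases hleaf _ (by simp [hcnA, hcnB]) hu.2 d hdc with h1 | h1
            · right; left; exact part_eq h.1 hD hA hd h1
            · right; right; exact part_eq h.1 hD hB hd h1
        exact (Finset.card_le_card hsub).trans Finset.card_le_three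
    · push Not at hone
      have hsub : π ⊆ {A0} := by
        intro D hD; simp [hone D hD]
      have := Finset.card_le_card hsub
      simp at this
      omega

theorem K3_IC {V : Type*} [Fintype V] (h3 : Fintype.card V = 3) :
    IC (⊤ : SimpleGraph V) = 3 := by
  classical
  rw [IC_eq_iff _ _ (by norm_num)]
  refine ⟨⟨Finset.univ.image singleton, ⟨part_mk ?_ ?_ ?_, ?_⟩, ?_⟩, fun π h => h3 ▸ part_card_s14 h.1⟩
  · intro A hA
    simp only [Finset.mem_image] at hA
    obtain ⟨v, _, rfl⟩ := hA
    simp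
  · intro v
    exact ⟨{v}, by simp, by simp⟩
  · intro A hA B hB v hvA hvB
    simp only [Finset.mem_image] at hA hB
    obtain ⟨a, _, rfl⟩ := hA
    obtain ⟨b, _, rfl⟩ := hB
    simp at hvA hvB
    rw [← hvA, ← hvB]
  · intro A hA
    simp only [Finset.mem_image] at hA
    obtain ⟨v, _, rfl⟩ := hA
    left
    refine ⟨v, by simp, fun w => ?_⟩
    by_cases hw : w = v
    · left; simp [hw]
    · right; exact ⟨v, by simp, by simpa using Ne.symm hw⟩
  · rw [Finset.card_image_of_injective _ Finset.singleton_injective, Finset.card_univ, h3]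

/-- The structural heart: two coalitions sharing the class `A`. -/
theorem toB2 {V : Type*} [Fintype V] (G : SimpleGraph V) (hIC : IC G = 3)
    (A B C : Finset V) (hA : A.Nonempty) (hB : B.Nonempty) (hdAB : Disjoint A B) (hdAC : Disjoint A C)
    (hcov : ∀ v, v ∈ A ∨ v ∈ B ∨ v ∈ C)
    (h1 : IndepDom G ((A : Set V) ∪ B)) (h2 : IndepDom G ((A : Set V) ∪ C)) (hdBC : Disjoint B C) : InB2 G := by
  classical
  have hiso : ∀ a ∈ A, ∀ v, ¬ G.Adj a v := by
    intro a ha v hav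
    rcases hcov v with h | h | h
    · exact h1.1 (Or.inl ha) (Or.inl h) hav
    · exact h1.1 (Or.inl ha) (Or.inr h) hav
    · exact h2.1 (Or.inl ha) (Or.inr h) hav
  have hdis : ∀ v, v ∈ B → v ∉ A ∧ v ∉ C := fun v hv =>
    ⟨fun h => Finset.disjoint_left.1 hdAB h hv, fun h => Finset.disjoint_left.1 hdBC hv h⟩
  have hdis' : ∀ v, v ∈ C → v ∉ A ∧ v ∉ B := fun v hv =>
    ⟨fun h => Finset.disjoint_left.1 hdAC h hv, fun h => Finset.disjoint_left.1 hdBC h hv⟩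
  have hnb : ∀ v, v ∉ A → ∃ u, u ∉ A ∧ G.Adj v u := by
    intro v hv
    have key : ∀ S : Finset V, v ∉ S → Dominating G ((A : Set V) ∪ S) → ∃ u, u ∉ A ∧ G.Adj v u := by
      intro S hS hd
      rcases hd v with h | ⟨u, _, h⟩
      · rcases h with h | h
        · exact absurd h hv
        · exact absurd h hS
      · exact ⟨u, fun hu => hiso u hu v h, h.symm⟩
    rcases hcov v with h | h | h
    · exact absurd h hv
    · exact key C (hdis v h).2 h2.2
    · exact key B (hdis' v h).2 h1.2
  let e1 : {v // v ∈ A} ≃ Fin A.card := A.equivFin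
  let e2 : {v // ¬ v ∈ A} ≃ Fin (Fintype.card {v // ¬ v ∈ A}) := Fintype.equivFin _
  let f : Fin (Fintype.card {v // ¬ v ∈ A}) → V := fun i => (e2.symm i : V)
  let H : SimpleGraph (Fin (Fintype.card {v // ¬ v ∈ A})) := G.comap f
  have hHadj : ∀ i j, H.Adj i j ↔ G.Adj (f i) (f j) := fun i j => Iff.rfl
  let e : Fin (Fintype.card {v // ¬ v ∈ A}) ⊕ Fin A.card ≃ V :=
    ((Equiv.sumComm _ _).trans (Equiv.sumCongr e1.symm e2.symm)).trans (Equiv.sumCompl (fun v => v ∈ A))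
  have el : ∀ i, e (Sum.inl i) = f i := fun i => by simp [e, f]
  have er : ∀ i, e (Sum.inr i) ∈ A := fun i => by simp [e]
  let E : (H ⊕g (⊥ : SimpleGraph (Fin A.card))) ≃g G := ⟨e, by
    intro x y
    rcases x with x | x <;> rcases y with y | y
    · rw [el, el]; simp [hHadj]
    · simp only [SimpleGraph.sum_adj, iff_false]
      exact fun h => hiso _ (er y) _ h.symm
    · simp only [SimpleGraph.sum_adj, iff_false]
      exact hiso _ (er x) _
    · simp only [SimpleGraph.sum_adj, SimpleGraph.bot_adj, iff_false]
      exact hiso _ (er x) _⟩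
  have hm : 1 ≤ A.card := Finset.card_pos.2 hA
  have hH : ∀ v, ∃ w, H.Adj v w := by
    intro i
    obtain ⟨u, hu, hadj⟩ := hnb (f i) (e2.symm i).2
    refine ⟨e2 ⟨u, hu⟩, ?_⟩
    rw [hHadj]
    simpa [f] using hadj
  have hne : Nonempty (Fin (Fintype.card {v // ¬ v ∈ A})) := by
    obtain ⟨b, hb⟩ := hB
    exact ⟨e2 ⟨b, (hdis b hb).1⟩⟩
  refine ⟨_, H, A.card, hm, ?_, hH, ?_, ⟨E.symm⟩⟩
  · refine ⟨SimpleGraph.Coloring.mk (fun i => if f i ∈ B then (0 : Fin 2) else 1) ?_⟩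
    intro i j hij
    rw [hHadj] at hij
    have hi := (e2.symm i).2
    have hj := (e2.symm j).2
    have hC : ∀ k, f k ∉ B → f k ∈ C := fun k hk =>
      ((hcov (f k)).resolve_left (e2.symm k).2).resolve_left hk
    by_cases hiB : f i ∈ B <;> by_cases hjB : f j ∈ B
    · exact absurd hij (h1.1 (Or.inr hiB) (Or.inr hjB))
    · simp [hiB, hjB]
    · simp [hiB, hjB]
    · exact absurd hij (h2.1 (Or.inr (hC i hiB)) (Or.inr (hC j hjB)))
  · rw [← sum_iff H A.card hm hH, IC_iso E, hIC]

theorem starOf {V : Type*} (G : SimpleGraph V) (A B C : Finset V) (v : V)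
    (hA : (A : Set V) = {v}) (hd : Dominating G (A : Set V))
    (hcov : ∀ v, v ∈ A ∨ v ∈ B ∨ v ∈ C)
    (h1 : IndepDom G ((B : Set V) ∪ C)) :
    ∃ c, ∀ u v, G.Adj u v ↔ u ≠ v ∧ (u = c ∨ v = c) := by
  rw [hA] at hd
  have hfull : ∀ u, u ≠ v → G.Adj v u := by
    intro u hu
    rcases hd u with h | ⟨w, hw, h⟩
    · exact absurd h hu
    · rw [Set.mem_singleton_iff] at hw; rwa [hw] at h
  have hmem : ∀ u, u ≠ v → u ∈ (B : Set V) ∪ C := by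
    intro u hu
    rcases hcov u with h | h
    · have : u ∈ (A : Set V) := h
      rw [hA] at this
      exact absurd this hu
    · exact h
  refine ⟨v, fun u w => ⟨fun h => ⟨h.ne, ?_⟩, ?_⟩⟩
  · by_contra hh
    push Not at hh
    exact h1.1 (hmem u hh.1) (hmem w hh.2) h
  · rintro ⟨hne, rfl | rfl⟩
    · exact hfull _ hne.symm
    · exact (hfull _ hne).symm

theorem stmt_14 {V : Type*} [Fintype V] (G : SimpleGraph V) (n : ℕ)
    (hn : Fintype.card V = n) (h3 : 3 ≤ n) :
    IC G = 3 ↔ (Nonempty (G ≃g (⊤ : SimpleGraph (Fin 3))) ∨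
      Nonempty (G ≃g starGraph n) ∨ InB2 G) := by
  classical
  constructor
  · intro hIC
    obtain ⟨⟨π, h, hcard⟩, _⟩ := (IC_eq_iff G 3 (by norm_num)).1 hIC
    obtain ⟨A, B, C, hAB, hAC, hBC, rfl⟩ := Finset.card_eq_three.1 hcard
    have hA : A ∈ ({A, B, C} : Finset (Finset V)) := by simp
    have hB : B ∈ ({A, B, C} : Finset (Finset V)) := by simp
    have hC : C ∈ ({A, B, C} : Finset (Finset V)) := by simp
    have nA := h.1.1 A hA
    have nB := h.1.1 B hB
    have nC := h.1.1 C hC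
    have dAB : Disjoint A B := Finset.disjoint_left.2 fun v h1 h2 => hAB (part_eq h.1 hA hB h1 h2)
    have dAC : Disjoint A C := Finset.disjoint_left.2 fun v h1 h2 => hAC (part_eq h.1 hA hC h1 h2)
    have dBC : Disjoint B C := Finset.disjoint_left.2 fun v h1 h2 => hBC (part_eq h.1 hB hC h1 h2)
    have hcov : ∀ v, v ∈ A ∨ v ∈ B ∨ v ∈ C := by
      intro v
      obtain ⟨D, hD, hv⟩ := part_ex h.1 v
      simp only [Finset.mem_insert, Finset.mem_singleton] at hD
      rcases hD with rfl | rfl | rfl <;> simp [hv]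
    have hsing : ∀ (D : Finset V) (v : V), (D : Set V) = {v} → Dominating G (D : Set V) → IndepDom G (D : Set V) := by
      intro D v hv hd
      refine ⟨?_, hd⟩
      rw [hv]
      intro a ha b hb
      rw [Set.mem_singleton_iff] at ha hb
      rw [ha, hb]; simp
    -- reduced alternatives
    have alt : ∀ D ∈ ({A, B, C} : Finset (Finset V)),
        (∃ v : V, (D : Set V) = {v} ∧ Dominating G (D : Set V)) ∨
        (∃ F ∈ ({A, B, C} : Finset (Finset V)), F ≠ D ∧ ¬ IndepDom G (F : Set V) ∧
          IndepDom G ((D : Set V) ∪ F)) := by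
      intro D hD
      rcases h.2 D hD with h1 | ⟨_, F, hF, hne, _, _, _, _, h5, h6⟩
      · exact Or.inl h1
      · exact Or.inr ⟨F, hF, hne, h5, h6⟩
    simp only [Finset.mem_insert, Finset.mem_singleton] at alt
    have cBC : ∀ {X Y : Finset V}, IndepDom G ((X : Set V) ∪ Y) → IndepDom G ((Y : Set V) ∪ X) := by
      intro X Y hh; rwa [Set.union_comm]
    -- star case
    have starcase : ∀ X Y Z : Finset V, (∀ v, v ∈ X ∨ v ∈ Y ∨ v ∈ Z) →
        (∃ v : V, (X : Set V) = {v} ∧ Dominating G (X : Set V)) →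
        IndepDom G ((Y : Set V) ∪ Z) → Nonempty (G ≃g starGraph n) := by
      rintro X Y Z hc ⟨v, hv, hd⟩ hu
      exact (star_iff G n hn h3).2 (starOf G X Y Z v hv hd hc hu)
    have hcov1 : ∀ v, v ∈ B ∨ v ∈ A ∨ v ∈ C := fun v => by have := hcov v; tauto
    have hcov2 : ∀ v, v ∈ C ∨ v ∈ A ∨ v ∈ B := fun v => by have := hcov v; tauto
    have b1 := toB2 G hIC A B C nA nB dAB dAC hcov
    have b2 := toB2 G hIC B A C nB nA dAB.symm dBC hcov1
    have b3 := toB2 G hIC C A B nC nA dAC.symm dBC.symm hcov2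
    have hs : ∀ D : Finset V, (∃ v : V, (D : Set V) = {v} ∧ Dominating G (D : Set V)) → IndepDom G (D : Set V) :=
      fun D ⟨v, hv, hd⟩ => hsing D v hv hd
    have s1 := starcase A B C hcov
    have s2 := starcase B A C hcov1
    have s3 := starcase C A B hcov2
    have k3 : (∃ v : V, (A : Set V) = {v} ∧ Dominating G (A : Set V)) →
        (∃ v : V, (B : Set V) = {v} ∧ Dominating G (B : Set V)) →
        (∃ v : V, (C : Set V) = {v} ∧ Dominating G (C : Set V)) →
        Nonempty (G ≃g (⊤ : SimpleGraph (Fin 3))) := by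
      rintro ⟨a, ha, hda⟩ ⟨b, hb, hdb⟩ ⟨c, hc, hdc⟩
      have full : ∀ (D : Finset V) (v : V), (D : Set V) = {v} → Dominating G (D : Set V) →
          ∀ u, u ≠ v → G.Adj v u := by
        intro D v hv hd u hu
        rw [hv] at hd
        rcases hd u with h | ⟨w, hw, h⟩
        · exact absurd h hu
        · rw [Set.mem_singleton_iff] at hw; rwa [hw] at h
      have hG : G = ⊤ := by
        ext u v
        rw [SimpleGraph.top_adj]
        refine ⟨fun h => h.ne, fun hne => ?_⟩
        have : ∀ (D : Finset V) (x : V), (D : Set V) = {x} → u ∈ D → u = x := by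
          intro D x hx hu
          have : u ∈ (D : Set V) := hu
          rwa [hx] at this
        rcases hcov u with h | h | h
        · have := this A a ha h; subst this; exact full A _ ha hda v hne.symm
        · have := this B b hb h; subst this; exact full B _ hb hdb v hne.symm
        · have := this C c hc h; subst this; exact full C _ hc hdc v hne.symm
      have hcV : Fintype.card V = 3 := by
        have hA' : A = {a} := by exact_mod_cast ha
        have hB' : B = {b} := by exact_mod_cast hb
        have hC' : C = {c} := by exact_mod_cast hc
        have : (Finset.univ : Finset V) ⊆ {a, b, c} := by
          intro v _
          have := hcov v
          simpa [hA', hB', hC'] using this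
        have h1 := (Finset.card_le_card this).trans Finset.card_le_three
        rw [Finset.card_univ] at h1
        omega
      subst hG
      exact ⟨SimpleGraph.Iso.completeGraph (Fintype.equivFinOfCardEq hcV)⟩
    have aA := alt A (by simp)
    have aB := alt B (by simp)
    have aC := alt C (by simp)
    have aA' : (∃ v : V, (A : Set V) = {v} ∧ Dominating G (A : Set V)) ∨
        (¬ IndepDom G (B : Set V) ∧ IndepDom G ((A : Set V) ∪ B)) ∨
        (¬ IndepDom G (C : Set V) ∧ IndepDom G ((A : Set V) ∪ C)) := by
      rcases aA with h1 | ⟨F, rfl | rfl | rfl, h1, h2, h3⟩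
      · exact Or.inl h1
      · exact absurd rfl h1
      · exact Or.inr (Or.inl ⟨h2, h3⟩)
      · exact Or.inr (Or.inr ⟨h2, h3⟩)
    have aB' : (∃ v : V, (B : Set V) = {v} ∧ Dominating G (B : Set V)) ∨
        (¬ IndepDom G (A : Set V) ∧ IndepDom G ((A : Set V) ∪ B)) ∨
        (¬ IndepDom G (C : Set V) ∧ IndepDom G ((B : Set V) ∪ C)) := by
      rcases aB with h1 | ⟨F, rfl | rfl | rfl, h1, h2, h3⟩
      · exact Or.inl h1
      · exact Or.inr (Or.inl ⟨h2, cBC h3⟩)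
      · exact absurd rfl h1
      · exact Or.inr (Or.inr ⟨h2, h3⟩)
    have aC' : (∃ v : V, (C : Set V) = {v} ∧ Dominating G (C : Set V)) ∨
        (¬ IndepDom G (A : Set V) ∧ IndepDom G ((A : Set V) ∪ C)) ∨
        (¬ IndepDom G (B : Set V) ∧ IndepDom G ((B : Set V) ∪ C)) := by
      rcases aC with h1 | ⟨F, rfl | rfl | rfl, h1, h2, h3⟩
      · exact Or.inl h1
      · exact Or.inr (Or.inl ⟨h2, cBC h3⟩)
      · exact Or.inr (Or.inr ⟨h2, cBC h3⟩)
      · exact absurd rfl h1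
    have hsA := hs A
    have hsB := hs B
    have hsC := hs C
    have b1' := fun x y => b1 x y dBC
    have b2' := fun (x : IndepDom G ((A : Set V) ∪ B)) y => b2 (cBC x) y dAC
    have b3' := fun (x : IndepDom G ((A : Set V) ∪ C)) (y : IndepDom G ((B : Set V) ∪ C)) =>
      b3 (cBC x) (cBC y) dAB
    exact logic_end aA' aB' aC' hsA hsB hsC k3 s1 s2 s3 b1' b2' b3'
  · rintro (⟨⟨e⟩⟩ | h | ⟨W, H, m, hm, _, hH, hid, ⟨e⟩⟩)
    · rw [IC_iso e]; exact K3_IC (by simp)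
    · obtain ⟨c, hc⟩ := (star_iff G n hn h3).1 h
      exact star_IC G (by omega) c hc
    · have : Finite (W ⊕ Fin m) := Finite.of_equiv V e.toEquiv
      have hf : Finite W := Finite.of_injective (Sum.inl : W → W ⊕ Fin m) Sum.inl_injective
      have hne : Nonempty W := by
        obtain ⟨⟨π, h1, h2⟩, _⟩ := (id_eq_iff H 2 (by norm_num)).1 hid
        have : π.Nonempty := Finset.card_pos.1 (by omega)
        obtain ⟨A, hA⟩ := this
        obtain ⟨w, _⟩ := h1.1.1 A hA
        exact ⟨w⟩
      rw [IC_iso e]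
      exact (sum_iff H m hm hH).2 hid

end ICNL
end
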